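/- Let r>0, let m≥1 be an integer with c_m = -(π/r)^2·((2m-1)/4)^2, and let α_0>0, β_0>0, γ_0>0 be such that β_0 = -c_m·α_0 - c_m^2 while β_0 ≠ -c_k·α_0 - c_k^2 for every integer k≥1 with k ≠ m (simple point). Then for every ε>0 there exist a positive real α with |α-α_0| < ε and a four times continuously differentiable function x on [-r,r], not identically zero, satisfying the boundary conditions x'(-r) = x'''(-r) = 0, x(r) = x''(r) = 0, the nonlinear equation x'''' + α·x'' + β_0·x - γ_0·x^3 - 3·(x'')^3 - 12·x'·x''·x''' - 3·(x')^2·(x'''' - (α/2)·x'') = 0 on [-r,r], and sup_{s∈[-r,r]}|x^{(k)}(s)| < ε for k = 0,1,2,3,4. (Bifurcation with respect to the compressive-force parameter α alone, with β and γ fixed.) -/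

import Mathlib

open Real Set

/-!
Take the fourth derivative `u = x''''` as the unknown in `C([-r, r])`. With `K` the solution
operator of `x'' = u`, `x'(-r) = 0`, `x(r) = 0`, the boundary value problem becomes
`u + α K u + β K² u = N(u, α)`, where `N` is cubic in `u`. On the ray through `(α₀, β₀)` the linear
part factors as `(1 + μ₁ K)(1 + μ₂ K)` with `μ₁ = -c_m` and `μ₂ = α₀ - μ₁`. The first factor kills
the cosine mode `φ`, and at a simple point the second factor is injective or equal to the first.

Substituting `u = t (φ + v)` with `v` orthogonal to `φ` and dividing by `t` gives an equation which
is regular at `t = 0`; the implicit function theorem solves it for `(v, α)` near `(0, α₀)`. The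
operator to be inverted is the linear part bordered by the column `K φ` and the row `⟨φ, ·⟩`. It is
a compact perturbation of the identity, so it suffices that it is injective.
-/

open Filter Topology

section FredholmAlternative

variable {𝕜 X : Type*} [RCLike 𝕜] [NormedAddCommGroup X] [NormedSpace 𝕜 X] [CompleteSpace X]

theorem isInvertible_id_add_of_isCompactOperator {T : X →L[𝕜] X} (hT : IsCompactOperator T)
    (hker : ∀ v, v + T v = 0 → v = 0) : (.id 𝕜 X + T).IsInvertible := by
  rcases hT.hasEigenvalue_or_mem_resolventSet (neg_ne_zero.2 (one_ne_zero' 𝕜)) with hev | hres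
  · obtain ⟨v, hv⟩ := hev.exists_hasEigenvector
    have hTv : T v = -v := by simpa using hv.apply_eq_smul
    exact absurd (hker v (by rw [hTv, add_neg_cancel])) hv.2
  · obtain ⟨U, hU⟩ := ((spectrum.mem_resolventSet_iff).1 hres).neg
    refine ⟨ContinuousLinearEquiv.ofUnit U, ContinuousLinearMap.ext fun v => ?_⟩
    have hUv : (U : X →L[𝕜] X) v = T v + v := by
      simpa [Algebra.algebraMap_eq_smul_one] using congrArg (· v) hU
    exact hUv.trans (add_comm _ _)

end FredholmAlternative

section BorderedOperator

variable {𝕜 X Y : Type*} [RCLike 𝕜] [NormedAddCommGroup X] [NormedSpace 𝕜 X]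
  [NormedAddCommGroup Y] [NormedSpace 𝕜 Y]

/-- The operator `(v, a) ↦ (L v + a • y, ψ v)` obtained by bordering `L` with a column `y` and a
row `ψ`. At a simple eigenvalue, bordering restores the invertibility of the linearization. -/
noncomputable def borderedOperator (L : X →L[𝕜] Y) (y : Y) (ψ : X →L[𝕜] 𝕜) :
    X × 𝕜 →L[𝕜] Y × 𝕜 :=
  (L.coprod (.toSpanSingleton 𝕜 y)).prod (ψ ∘L .fst 𝕜 X 𝕜)

@[simp]
theorem borderedOperator_apply (L : X →L[𝕜] Y) (y : Y) (ψ : X →L[𝕜] 𝕜) (p : X × 𝕜) :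
    borderedOperator L y ψ p = (L p.1 + p.2 • y, ψ p.1) := rfl

theorem isInvertible_borderedOperator [CompleteSpace X] {T : X →L[𝕜] X}
    (hT : IsCompactOperator T) {y : X} {ψ : X →L[𝕜] 𝕜}
    (hker : ∀ v (a : 𝕜), v + T v + a • y = 0 → ψ v = 0 → v = 0 ∧ a = 0) :
    (borderedOperator (.id 𝕜 X + T) y ψ).IsInvertible := by
  let column : 𝕜 →L[𝕜] X × 𝕜 := .inl 𝕜 X 𝕜 ∘L .toSpanSingleton 𝕜 y
  let row : X × 𝕜 →L[𝕜] 𝕜 := ψ ∘L .fst 𝕜 X 𝕜 - .snd 𝕜 X 𝕜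
  let S : X × 𝕜 →L[𝕜] X × 𝕜 :=
    .inl 𝕜 X 𝕜 ∘L T ∘L .fst 𝕜 X 𝕜 + column ∘L .snd 𝕜 X 𝕜 + .inr 𝕜 X 𝕜 ∘L row
  have hS : IsCompactOperator S :=
    (((hT.comp_clm (.fst 𝕜 X 𝕜)).clm_comp (.inl 𝕜 X 𝕜)).add
      ((isCompactOperator_of_locallyCompactSpace_rng column).comp_clm (.snd 𝕜 X 𝕜))).add
      ((isCompactOperator_of_locallyCompactSpace_dom row).clm_comp (.inr 𝕜 X 𝕜))
  have hbordered : borderedOperator (.id 𝕜 X + T) y ψ = .id 𝕜 (X × 𝕜) + S := by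
    ext p <;> simp [S, column, row]
  rw [hbordered]
  refine isInvertible_id_add_of_isCompactOperator hS fun p hp => ?_
  replace hp : borderedOperator (.id 𝕜 X + T) y ψ p = 0 := by rw [hbordered]; exact hp
  obtain ⟨hrange, hrow⟩ := Prod.mk_eq_zero.1 hp
  exact Prod.mk_eq_zero.2 (hker p.1 p.2 hrange hrow)

end BorderedOperator

section Factorization

variable {𝕜 X : Type*} [Field 𝕜] [AddCommGroup X] [Module 𝕜 X] {K : X →ₗ[𝕜] X} {φ : X}
  {ψ : X →ₗ[𝕜] 𝕜} {μ₁ μ₂ : 𝕜}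

theorem eq_zero_of_ker_eq_span (hψφ : ψ φ ≠ 0)
    (hker : ∀ v, v + μ₁ • K v = 0 → ∃ a : 𝕜, v = a • φ) {v : X} (hv : v + μ₁ • K v = 0)
    (hψv : ψ v = 0) : v = 0 := by
  obtain ⟨a, rfl⟩ := hker v hv
  have ha : a = 0 := by simpa [hψφ] using hψv
  rw [ha, zero_smul]

-- With `w = v + μ₂ • K v` the equation is `w + μ₁ • K w = -a • K φ`: applying `ψ` gives `a = 0`,
-- after which the two factors can be inverted one at a time on the kernel of `ψ`.
theorem eq_zero_of_factored_bordered (hψ : ∀ v, ψ v + μ₁ * ψ (K v) = 0) (hψφ : ψ φ ≠ 0)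
    (hker₁ : ∀ v, v + μ₁ • K v = 0 → ∃ a : 𝕜, v = a • φ)
    (hker₂ : μ₂ = μ₁ ∨ ∀ v, v + μ₂ • K v = 0 → v = 0) {v : X} {a : 𝕜}
    (heq : v + ((μ₁ + μ₂) • K v + (μ₁ * μ₂) • K (K v)) + a • K φ = 0) (hψv : ψ v = 0) :
    v = 0 ∧ a = 0 := by
  have hμψ : μ₁ * ψ (K φ) ≠ 0 := fun h0 => hψφ (by simpa [h0] using hψ φ)
  have hψK : ψ (K v) = 0 := by simpa [hψv, left_ne_zero_of_mul hμψ] using hψ v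
  set w := v + μ₂ • K v with hw
  have hweq : w + μ₁ • K w + a • K φ = 0 := by
    rw [← heq, hw, map_add, map_smul]
    module
  have ha : a = 0 := by
    have hψeq : ψ w + μ₁ * ψ (K w) + a * ψ (K φ) = 0 := by simpa using congrArg ψ hweq
    rw [hψ, zero_add] at hψeq
    exact (mul_eq_zero.1 hψeq).resolve_right (right_ne_zero_of_mul hμψ)
  have hw0 : w = 0 := by
    refine eq_zero_of_ker_eq_span hψφ hker₁ (by simpa [ha] using hweq) ?_
    simp [hw, hψv, hψK]
  refine ⟨?_, ha⟩
  rcases hker₂ with rfl | hker₂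
  · exact eq_zero_of_ker_eq_span hψφ hker₁ hw0 hψv
  · exact hker₂ v hw0

end Factorization

section FactoredBorderedOperator

variable {𝕜 X : Type*} [RCLike 𝕜] [NormedAddCommGroup X] [NormedSpace 𝕜 X] [CompleteSpace X]

theorem isInvertible_borderedOperator_of_factored {K : X →L[𝕜] X} (hK : IsCompactOperator K)
    {φ : X} {ψ : X →L[𝕜] 𝕜} {μ₁ μ₂ : 𝕜} (hψ : ∀ v, ψ v + μ₁ * ψ (K v) = 0) (hψφ : ψ φ ≠ 0)
    (hker₁ : ∀ v, v + μ₁ • K v = 0 → ∃ a : 𝕜, v = a • φ)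
    (hker₂ : μ₂ = μ₁ ∨ ∀ v, v + μ₂ • K v = 0 → v = 0) :
    (borderedOperator (.id 𝕜 X + (μ₁ * μ₂) • K ∘L K + (μ₁ + μ₂) • K) (K φ) ψ).IsInvertible := by
  have hT : IsCompactOperator ((μ₁ + μ₂) • K + (μ₁ * μ₂) • K ∘L K) :=
    (hK.smul _).add ((hK.comp_clm K).smul _)
  rw [add_right_comm, add_assoc]
  exact isInvertible_borderedOperator hT fun v a heq hψv =>
    eq_zero_of_factored_bordered (K := K.toLinearMap) (ψ := ψ.toLinearMap) hψ hψφ hker₁ hker₂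
      heq hψv

end FactoredBorderedOperator

section Bifurcation

variable {X Y : Type*} [NormedAddCommGroup X] [NormedSpace ℝ X] [NormedAddCommGroup Y]
  [NormedSpace ℝ Y] {A C : X →L[ℝ] Y} {N : X × ℝ → Y} {k : ℕ} {φ : X} {α₀ : ℝ} {ψ : X →L[ℝ] ℝ}

/-- The map `(t, (v, α)) ↦ (A w + α • C w - t ^ k • N (w, α), ψ v)` with `w = φ + v`. For `N`
homogeneous of degree `k + 1` in its first argument and `t ≠ 0`, its zeros give the solutions
`u = t • w` of `A u + α • C u = N (u, α)`; it remains regular at `t = 0`. -/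
noncomputable def rescaledMap (A C : X →L[ℝ] Y) (N : X × ℝ → Y) (k : ℕ) (φ : X) (ψ : X →L[ℝ] ℝ)
    (q : ℝ × X × ℝ) : Y × ℝ :=
  (A (φ + q.2.1) + q.2.2 • C (φ + q.2.1) - q.1 ^ k • N (φ + q.2.1, q.2.2), ψ q.2.1)

theorem contDiff_rescaledMap (hN : ContDiff ℝ 1 N) : ContDiff ℝ 1 (rescaledMap A C N k φ ψ) := by
  unfold rescaledMap
  fun_prop

theorem fderiv_rescaledMap_comp_inr (hN : ContDiff ℝ 1 N) (hk : k ≠ 0) :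
    fderiv ℝ (rescaledMap A C N k φ ψ) (0, 0, α₀) ∘L .inr ℝ ℝ (X × ℝ) =
      borderedOperator (A + α₀ • C) (C φ) ψ := by
  have hchain := HasFDerivAt.comp (0, α₀)
    ((contDiff_rescaledMap (A := A) (C := C) (k := k) (φ := φ) (ψ := ψ) hN).differentiable
      one_ne_zero _).hasFDerivAt (hasFDerivAt_prodMk_right (0 : ℝ) ((0 : X), α₀))
  have hslice : rescaledMap A C N k φ ψ ∘ Prod.mk 0 =
      fun p : X × ℝ => (A (φ + p.1) + p.2 • C (φ + p.1), ψ p.1) := by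
    funext p
    simp [rescaledMap, hk]
  rw [hslice] at hchain
  have hw : HasFDerivAt (fun p : X × ℝ => φ + p.1) (.fst ℝ X ℝ) (0, α₀) :=
    hasFDerivAt_fst.const_add φ
  have hdirect := ((A.hasFDerivAt.comp _ hw).add
    (hasFDerivAt_snd.smul (C.hasFDerivAt.comp _ hw))).prodMk
    (ψ.hasFDerivAt.comp ((0 : X), α₀) hasFDerivAt_fst)
  refine (hchain.unique hdirect).trans (ContinuousLinearMap.ext fun p => ?_)
  simp [add_assoc]

theorem frequently_bifurcation_of_homogeneous [CompleteSpace X] [CompleteSpace Y]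
    (hN : ContDiff ℝ 1 N) (hk : k ≠ 0)
    (hhom : ∀ (t : ℝ) v α, N (t • v, α) = t ^ (k + 1) • N (v, α))
    (hφ : φ ≠ 0) (hker : A φ + α₀ • C φ = 0)
    (hinv : (borderedOperator (A + α₀ • C) (C φ) ψ).IsInvertible) :
    ∃ᶠ p in 𝓝 ((0 : X), α₀), p.1 ≠ 0 ∧ A p.1 + p.2 • C p.1 = N p := by
  have hG := (contDiff_rescaledMap (A := A) (C := C) (k := k) (φ := φ) (ψ := ψ) hN).contDiffAt
    (x := (0, 0, α₀))
  have hGinv : (fderiv ℝ (rescaledMap A C N k φ ψ) (0, 0, α₀) ∘L .inr ℝ ℝ (X × ℝ)).IsInvertible :=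
    by rwa [fderiv_rescaledMap_comp_inr hN hk]
  have hG0 : rescaledMap A C N k φ ψ (0, 0, α₀) = 0 := by simp [rescaledMap, hk, hker]
  set g : ℝ → X × ℝ := hG.implicitFunction one_ne_zero hGinv
  have hzero : ∀ᶠ t in 𝓝 0, rescaledMap A C N k φ ψ (t, g t) = 0 := by
    simpa only [hG0] using hG.eventually_apply_implicitFunction one_ne_zero hGinv
  have hg : Tendsto g (𝓝 0) (𝓝 (0, α₀)) :=
    (hG.hasStrictFDerivAt one_ne_zero).tendsto_implicitFunctionOfProdDomain hGinv
  have hw : Tendsto (fun t => φ + (g t).1) (𝓝 0) (𝓝 φ) := by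
    simpa using hg.fst_nhds.const_add φ
  have hu : Tendsto (fun t => (t • (φ + (g t).1), (g t).2)) (𝓝 (0 : ℝ)) (𝓝 ((0 : X), α₀)) := by
    simpa using (tendsto_id.smul hw).prodMk_nhds hg.snd_nhds
  refine (hu.mono_left (nhdsWithin_le_nhds (s := {0}ᶜ))).frequently (Eventually.frequently ?_)
  filter_upwards [nhdsWithin_le_nhds hzero, nhdsWithin_le_nhds (hw.eventually_ne hφ),
    self_mem_nhdsWithin] with t htzero htne ht
  refine ⟨smul_ne_zero ht htne, ?_⟩
  have heq := sub_eq_zero.1 (Prod.mk_eq_zero.1 htzero).1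
  rw [hhom, pow_succ', mul_smul, ← heq, map_smul, map_smul, smul_add, smul_comm]

end Bifurcation

section EquicontinuousOperator

open scoped NNReal

variable {X M E : Type*} [NormedAddCommGroup X] [NormedSpace ℝ X] [PseudoMetricSpace M]
  [CompactSpace M] [NormedAddCommGroup E] [NormedSpace ℝ E] [ProperSpace E]

theorem isCompactOperator_of_lipschitzWith {T : X →L[ℝ] C(M, E)} {C : ℝ≥0}
    (hT : ∀ u, ‖u‖ ≤ 1 → LipschitzWith C (T u)) : IsCompactOperator T := by
  let e := (ContinuousMap.linearIsometryBoundedOfCompact M E ℝ).toContinuousLinearEquiv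
  let S := e.toContinuousLinearMap ∘L T
  have hS : IsCompactOperator S := by
    refine (isCompactOperator_iff_isCompact_closure_image_closedBall S.toLinearMap one_pos).2 ?_
    refine BoundedContinuousFunction.arzela_ascoli _ (isCompact_closedBall (0 : E) ‖T‖) _ ?_ ?_
    · rintro _ s ⟨u, hu, rfl⟩
      have hu : ‖u‖ ≤ 1 := mem_closedBall_zero_iff.1 hu
      exact mem_closedBall_zero_iff.2
        (((T u).norm_coe_le_norm s).trans (T.unit_le_opNorm u hu))
    · refine (LipschitzWith.uniformEquicontinuous _ C ?_).equicontinuous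
      rintro ⟨_, u, hu, rfl⟩
      exact hT u (mem_closedBall_zero_iff.1 hu)
  have hT_eq : T = e.symm.toContinuousLinearMap ∘L S := by ext u s; rfl
  rw [hT_eq]
  exact hS.clm_comp e.symm.toContinuousLinearMap

end EquicontinuousOperator

section Primitive

variable {a b : ℝ}

theorem eq_of_hasDerivWithinAt_zero {F : ℝ → ℝ}
    (hF : ∀ s ∈ Icc a b, HasDerivWithinAt F 0 (Icc a b) s) {s t : ℝ} (hs : s ∈ Icc a b)
    (ht : t ∈ Icc a b) : F s = F t := by
  have hbound := (convex_Icc a b).norm_image_sub_le_of_norm_hasDerivWithin_le hF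
    (fun _ _ => norm_zero.le) ht hs
  rwa [zero_mul, norm_le_zero_iff, sub_eq_zero] at hbound

variable [Fact (a ≤ b)]

open ContinuousMap (IccExtendCM IccExtendCM_of_mem)

@[simp]
theorem IccExtendCM_coe (u : C(Icc a b, ℝ)) (s : Icc a b) : IccExtendCM u (s : ℝ) = u s :=
  IccExtendCM_of_mem s.2

theorem intervalIntegrable_IccExtendCM (u : C(Icc a b, ℝ)) (s t : ℝ) :
    IntervalIntegrable (IccExtendCM u) MeasureTheory.volume s t :=
  (map_continuous _).intervalIntegrable _ _

/-- The operator sending a continuous function on `[a, b]` to its primitive vanishing at `p`. -/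
noncomputable def primitive (p : Icc a b) : C(Icc a b, ℝ) →L[ℝ] C(Icc a b, ℝ) :=
  LinearMap.mkContinuous
    { toFun := fun u => ⟨fun s => ∫ τ in (p : ℝ)..s, IccExtendCM u τ,
        (intervalIntegral.continuous_primitive
          (intervalIntegrable_IccExtendCM u) _).comp continuous_subtype_val⟩
      map_add' := fun u v => ContinuousMap.ext fun s =>
        intervalIntegral.integral_add (intervalIntegrable_IccExtendCM u _ _)
          (intervalIntegrable_IccExtendCM v _ _)
      map_smul' := fun c u => ContinuousMap.ext fun s =>
        intervalIntegral.integral_smul c (IccExtendCM u) }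
    (b - a) fun u => by
      have hab : 0 ≤ b - a := sub_nonneg.2 Fact.out
      refine (ContinuousMap.norm_le _ (by positivity)).2 fun s => ?_
      calc ‖∫ τ in (p : ℝ)..s, IccExtendCM u τ‖ ≤ ‖u‖ * |(s : ℝ) - p| :=
            intervalIntegral.norm_integral_le_of_norm_le_const fun τ _ => u.norm_coe_le_norm _
        _ ≤ ‖u‖ * (b - a) := by
            gcongr
            exact Real.dist_le_of_mem_Icc s.2 p.2
        _ = (b - a) * ‖u‖ := mul_comm _ _

theorem primitive_apply (p : Icc a b) (u : C(Icc a b, ℝ)) (s : Icc a b) :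
    primitive p u s = ∫ τ in (p : ℝ)..s, IccExtendCM u τ := rfl

@[simp]
theorem primitive_apply_self (p : Icc a b) (u : C(Icc a b, ℝ)) : primitive p u p = 0 :=
  intervalIntegral.integral_same

theorem hasDerivWithinAt_primitive (p : Icc a b) (u : C(Icc a b, ℝ)) (s : Icc a b) :
    HasDerivWithinAt (IccExtendCM (primitive p u)) (u s) (Icc a b) s := by
  have hderiv := ((map_continuous (IccExtendCM u)).integral_hasStrictDerivAt p s).hasDerivAt
  rw [IccExtendCM_coe] at hderiv
  refine hderiv.hasDerivWithinAt.congr_of_mem (fun t ht => ?_) s.2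
  rw [IccExtendCM_of_mem ht, primitive_apply]

theorem primitive_apply_eq_sub {F : ℝ → ℝ} {u : C(Icc a b, ℝ)}
    (hF : ∀ s : Icc a b, HasDerivWithinAt F (u s) (Icc a b) s) (p s : Icc a b) :
    primitive p u s = F s - F p := by
  have hconst := eq_of_hasDerivWithinAt_zero (F := IccExtendCM (primitive p u) - F)
    (fun t ht => by simpa using (hasDerivWithinAt_primitive p u ⟨t, ht⟩).sub (hF ⟨t, ht⟩)) s.2 p.2
  simp only [Pi.sub_apply, IccExtendCM_coe, primitive_apply_self] at hconst
  linarith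

theorem primitive_injective (hab : a < b) (p : Icc a b) : Function.Injective (primitive p) := by
  refine (injective_iff_map_eq_zero _).2 fun u hu => ContinuousMap.ext fun s => ?_
  have hderiv := hasDerivWithinAt_primitive p u s
  rw [hu] at hderiv
  exact (uniqueDiffOn_Icc hab s s.2).eq_deriv _ hderiv (hasDerivWithinAt_const _ _ 0)

theorem isCompactOperator_primitive (p : Icc a b) : IsCompactOperator (primitive p) := by
  refine isCompactOperator_of_lipschitzWith (C := 1) fun u hu => .of_dist_le_mul fun s t => ?_
  calc dist (primitive p u s) (primitive p u t) = ‖∫ τ in (t : ℝ)..s, IccExtendCM u τ‖ := by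
        rw [dist_eq_norm, primitive_apply, primitive_apply,
          intervalIntegral.integral_interval_sub_left (intervalIntegrable_IccExtendCM u _ _)
            (intervalIntegrable_IccExtendCM u _ _)]
    _ ≤ 1 * |(s : ℝ) - t| :=
        intervalIntegral.norm_integral_le_of_norm_le_const fun τ _ =>
          (u.norm_coe_le_norm _).trans hu

end Primitive

section CosineMode

variable {a b : ℝ}

/-- The cosine `s ↦ cos (ω (s - a))`, the solution of `u'' = -ω² u` with `u(a) = 1`, `u'(a) = 0`. -/
noncomputable def cosineMode (a b ω : ℝ) : C(Icc a b, ℝ) :=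
  ⟨fun s => cos (ω * (s - a)), by fun_prop⟩

theorem cosineMode_apply (ω : ℝ) (s : Icc a b) : cosineMode a b ω s = cos (ω * (s - a)) := rfl

/-- The `n`-th frequency (counted from `0`) for which `s ↦ cos (ω (s - a))` vanishes at `b`. -/
noncomputable def modeFrequency (a b : ℝ) (n : ℕ) : ℝ := (2 * n + 1) * π / (2 * (b - a))

theorem cos_modeFrequency_mul (hab : a < b) (n : ℕ) : cos (modeFrequency a b n * (b - a)) = 0 := by
  refine cos_eq_zero_iff.2 ⟨n, ?_⟩
  have := (sub_pos.2 hab).ne'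
  rw [modeFrequency]
  push_cast
  field_simp

end CosineMode

section SecondPrimitive

open ContinuousMap (IccExtendCM IccExtendCM_of_mem)

variable {a b : ℝ} [Fact (a ≤ b)]

/-- The `L²` inner product `g ↦ ∫ f g` of continuous functions on `[a, b]`. -/
noncomputable def integralPairing (f : C(Icc a b, ℝ)) : C(Icc a b, ℝ) →L[ℝ] ℝ :=
  ContinuousMap.evalCLM ℝ ⊤ ∘L primitive ⊥ ∘L ContinuousLinearMap.mul ℝ C(Icc a b, ℝ) f

theorem integralPairing_apply (f g : C(Icc a b, ℝ)) :
    integralPairing f g = ∫ τ in a..b, IccExtendCM f τ * IccExtendCM g τ := rfl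

theorem integralPairing_comm (f g : C(Icc a b, ℝ)) :
    integralPairing f g = integralPairing g f := by
  simp only [integralPairing_apply, mul_comm]

theorem integralPairing_self_nonneg (f : C(Icc a b, ℝ)) : 0 ≤ integralPairing f f :=
  intervalIntegral.integral_nonneg Fact.out fun _ _ => mul_self_nonneg _

theorem integralPairing_self_pos (hab : a < b) {f : C(Icc a b, ℝ)} (hf : f ≠ 0) :
    0 < integralPairing f f := by
  obtain ⟨s, hs⟩ := DFunLike.ne_iff.1 hf
  refine intervalIntegral.integral_pos hab (by fun_prop) (fun _ _ => mul_self_nonneg _)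
    ⟨s, s.2, ?_⟩
  rw [IccExtendCM_of_mem s.2]
  exact mul_self_pos.2 hs

-- The boundary terms vanish: one primitive is zero at `b`, the other at `a`.
theorem integralPairing_primitive_top (f g : C(Icc a b, ℝ)) :
    integralPairing (primitive ⊤ f) g = -integralPairing f (primitive ⊥ g) := by
  have hderiv (s : Icc a b) : HasDerivWithinAt
      (IccExtendCM (primitive ⊤ f) * IccExtendCM (primitive ⊥ g) : ℝ → ℝ)
      ((f * primitive ⊥ g + primitive ⊤ f * g : C(Icc a b, ℝ)) s) (Icc a b) s := by
    simpa using ((hasDerivWithinAt_primitive ⊤ f s).mul (hasDerivWithinAt_primitive ⊥ g s) :)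
  have hparts := primitive_apply_eq_sub hderiv ⊥ ⊤
  simp only [Pi.mul_apply, IccExtendCM_coe, primitive_apply_self, zero_mul, mul_zero,
    sub_zero, map_add, ContinuousMap.add_apply] at hparts
  exact eq_neg_of_add_eq_zero_right hparts

/-- The solution operator of `x'' = u`, `x'(a) = 0`, `x(b) = 0`. -/
noncomputable def secondPrimitive : C(Icc a b, ℝ) →L[ℝ] C(Icc a b, ℝ) :=
  primitive ⊤ ∘L primitive ⊥

theorem secondPrimitive_apply (u : C(Icc a b, ℝ)) :
    secondPrimitive u = primitive ⊤ (primitive ⊥ u) := rfl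

@[simp]
theorem secondPrimitive_apply_top (u : C(Icc a b, ℝ)) : secondPrimitive u ⊤ = 0 :=
  primitive_apply_self ⊤ _

theorem secondPrimitive_injective (hab : a < b) :
    Function.Injective (secondPrimitive : C(Icc a b, ℝ) → C(Icc a b, ℝ)) :=
  (primitive_injective hab ⊤).comp (primitive_injective hab ⊥)

theorem isCompactOperator_secondPrimitive :
    IsCompactOperator (secondPrimitive : C(Icc a b, ℝ) →L[ℝ] C(Icc a b, ℝ)) :=
  (isCompactOperator_primitive ⊤).comp_clm (primitive ⊥)

theorem integralPairing_secondPrimitive (f g : C(Icc a b, ℝ)) :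
    integralPairing f (secondPrimitive g) = -integralPairing (primitive ⊥ f) (primitive ⊥ g) := by
  rw [integralPairing_comm f, secondPrimitive_apply, integralPairing_primitive_top,
    integralPairing_comm]

theorem integralPairing_secondPrimitive_comm (f g : C(Icc a b, ℝ)) :
    integralPairing f (secondPrimitive g) = integralPairing (secondPrimitive f) g := by
  rw [integralPairing_comm (secondPrimitive f), integralPairing_secondPrimitive,
    integralPairing_secondPrimitive, integralPairing_comm (primitive ⊥ f)]

theorem cosineMode_ne_zero (ω : ℝ) : cosineMode a b ω ≠ 0 := fun h => by
  simpa [cosineMode_apply] using DFunLike.congr_fun h ⊥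

theorem cosineMode_add_sq_smul_secondPrimitive {ω : ℝ} (hω : cos (ω * (b - a)) = 0) :
    cosineMode a b ω + ω ^ 2 • secondPrimitive (cosineMode a b ω) = 0 := by
  have harg (s : ℝ) : HasDerivAt (fun t => ω * (t - a)) ω s := by
    simpa using ((hasDerivAt_id s).sub_const a).const_mul ω
  have hsin (s : Icc a b) : ω * primitive ⊥ (cosineMode a b ω) s = sin (ω * (s - a)) := by
    rw [← smul_eq_mul, ← ContinuousMap.smul_apply, ← map_smul, primitive_apply_eq_sub
      (F := fun t => sin (ω * (t - a))) fun s => ?_]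
    · simp
    · simpa [cosineMode_apply, mul_comm] using (harg s).sin.hasDerivWithinAt
  have hcos (s : Icc a b) : ω ^ 2 * secondPrimitive (cosineMode a b ω) s = -cos (ω * (s - a)) := by
    rw [← smul_eq_mul, ← ContinuousMap.smul_apply, secondPrimitive_apply, ← map_smul,
      primitive_apply_eq_sub (F := fun t => -cos (ω * (t - a))) fun s => ?_]
    · simp [hω]
    · refine (harg s).cos.neg.hasDerivWithinAt.congr_deriv ?_
      rw [ContinuousMap.smul_apply, smul_eq_mul, pow_two, mul_assoc, hsin]
      ring
  ext s
  simp [hcos, cosineMode_apply]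

-- With `U` the primitive of `u` from `a`, `u' = -ω² U`; hence
-- `t ↦ u(t) cos (ω (s - t)) - ω U(t) sin (ω (s - t))` is constant: compare its values at `s`, `a`.
theorem eq_smul_cosineMode {ω : ℝ} {u : C(Icc a b, ℝ)} (hu : u + ω ^ 2 • secondPrimitive u = 0) :
    u = u ⊥ • cosineMode a b ω := by
  have hu_eq : u = -ω ^ 2 • secondPrimitive u := by
    rw [neg_smul]; exact eq_neg_of_add_eq_zero_left hu
  have hu_deriv (t : Icc a b) :
      HasDerivWithinAt (IccExtendCM u) (-ω ^ 2 * primitive ⊥ u t) (Icc a b) t := by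
    refine ((hasDerivWithinAt_primitive ⊤ (primitive ⊥ u) t).const_mul (-ω ^ 2)).congr_of_mem
      (fun τ hτ => ?_) t.2
    simpa [IccExtendCM_of_mem hτ, secondPrimitive_apply] using DFunLike.congr_fun hu_eq ⟨τ, hτ⟩
  ext s
  have harg (t : ℝ) : HasDerivAt (fun t => ω * (s - t)) (-ω) t := by
    simpa using ((hasDerivAt_id t).const_sub (s : ℝ)).const_mul ω
  let F := fun t => IccExtendCM u t * cos (ω * (s - t))
    - ω * (IccExtendCM (primitive ⊥ u) t * sin (ω * (s - t)))
  have hF (t : Icc a b) : HasDerivWithinAt F 0 (Icc a b) t := by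
    refine (((hu_deriv t).mul (harg t).cos.hasDerivWithinAt).sub
      (((hasDerivWithinAt_primitive ⊥ u t).mul
        (harg t).sin.hasDerivWithinAt).const_mul ω)).congr_deriv ?_
    simp only [IccExtendCM_coe]
    ring
  have hconst : F s = F (⊥ : Icc a b) :=
    eq_of_hasDerivWithinAt_zero (fun t ht => hF ⟨t, ht⟩) s.2 (⊥ : Icc a b).2
  simp only [F, IccExtendCM_coe, primitive_apply_self] at hconst
  simpa [cosineMode_apply] using hconst

theorem eq_zero_of_add_smul_secondPrimitive (hab : a < b) {μ : ℝ} (hμ : μ ≤ 0)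
    {u : C(Icc a b, ℝ)} (hu : u + μ • secondPrimitive u = 0) : u = 0 := by
  by_contra hne
  have henergy := congrArg (integralPairing u) hu
  rw [map_add, map_smul, map_zero, integralPairing_secondPrimitive, smul_eq_mul] at henergy
  nlinarith [integralPairing_self_pos hab hne, integralPairing_self_nonneg (primitive ⊥ u)]

theorem exists_eq_modeFrequency_sq (hab : a < b) {μ : ℝ} {u : C(Icc a b, ℝ)} (hne : u ≠ 0)
    (hu : u + μ • secondPrimitive u = 0) : ∃ n, μ = modeFrequency a b n ^ 2 := by
  have hμ : 0 < μ := by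
    by_contra! hμ
    exact hne (eq_zero_of_add_smul_secondPrimitive hab hμ hu)
  have hcos : cos (√μ * (b - a)) = 0 := by
    rw [← sq_sqrt hμ.le] at hu
    have hmode := eq_smul_cosineMode hu
    have htop : u ⊤ = 0 := by simpa using DFunLike.congr_fun hu ⊤
    rw [hmode] at htop
    refine (mul_eq_zero.1 htop).resolve_left fun hbot => hne ?_
    rw [hmode, hbot, zero_smul]
  obtain ⟨k, hk⟩ := cos_eq_zero_iff.1 hcos
  have hab' := sub_pos.2 hab
  have hk_nonneg : 0 ≤ k := by
    have hpos : 0 < (2 * (k : ℝ) + 1) * π / 2 := hk ▸ mul_pos (sqrt_pos.2 hμ) hab'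
    have : (0 : ℝ) < 2 * k + 1 := by
      by_contra! h
      nlinarith [pi_pos]
    have : 0 < 2 * k + 1 := by exact_mod_cast this
    omega
  lift k to ℕ using hk_nonneg
  refine ⟨k, ?_⟩
  rw [← sq_sqrt hμ.le, modeFrequency, eq_div_of_mul_eq hab'.ne' hk, div_div]
  push_cast
  rfl

end SecondPrimitive

section IteratedIntegral

theorem contDiff_integral {g : ℝ → ℝ} {n : ℕ} (hg : ContDiff ℝ n g) (p : ℝ) :
    ContDiff ℝ (n + 1) fun t => ∫ τ in p..t, g τ := by
  have hderiv (t : ℝ) := hg.continuous.integral_hasStrictDerivAt p t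
  refine contDiff_succ_iff_deriv.2 ⟨fun t => (hderiv t).hasDerivAt.differentiableAt, by simp, ?_⟩
  rwa [funext fun t => (hderiv t).hasDerivAt.deriv]

theorem iteratedDeriv_succ_integral {g : ℝ → ℝ} (hg : Continuous g) (p : ℝ) (k : ℕ) :
    iteratedDeriv (k + 1) (fun t => ∫ τ in p..t, g τ) = iteratedDeriv k g := by
  rw [iteratedDeriv_succ', funext (hg.deriv_integral g p)]

end IteratedIntegral

section Rod

open ContinuousMap (IccExtendCM)

variable {a b : ℝ}

/-- `x` is an equilibrium shape of the rod on `[a, b]` for the parameters `α`, `β`, `γ`: it solves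
the equilibrium equation and the boundary conditions `x' = x''' = 0` at `a`, `x = x'' = 0` at
`b`. -/
structure IsRodEquilibrium (a b α β γ : ℝ) (x : ℝ → ℝ) : Prop where
  contDiff : ContDiff ℝ 4 x
  deriv_one_left : iteratedDeriv 1 x a = 0
  deriv_three_left : iteratedDeriv 3 x a = 0
  right : x b = 0
  deriv_two_right : iteratedDeriv 2 x b = 0
  equation : ∀ s ∈ Icc a b,
    iteratedDeriv 4 x s + α * iteratedDeriv 2 x s + β * x s
      - γ * (x s) ^ 3 - 3 * (iteratedDeriv 2 x s) ^ 3
      - 12 * iteratedDeriv 1 x s * iteratedDeriv 2 x s * iteratedDeriv 3 x s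
      - 3 * (iteratedDeriv 1 x s) ^ 2 *
          (iteratedDeriv 4 x s - (α / 2) * iteratedDeriv 2 x s) = 0

variable [Fact (a ≤ b)]

/-- `shapeDerivative k u` is the `k`-th derivative, for `k ≤ 4`, of the shape `x` satisfying the
boundary conditions of the rod and `x'''' = u`; the value for `k > 4` is irrelevant. -/
noncomputable def shapeDerivative : ℕ → C(Icc a b, ℝ) →L[ℝ] C(Icc a b, ℝ)
  | 0 => secondPrimitive ∘L secondPrimitive
  | 1 => primitive ⊥ ∘L secondPrimitive
  | 2 => secondPrimitive
  | 3 => primitive ⊥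
  | _ => .id ℝ _

/-- The nonlinear terms of the equilibrium equation, in terms of `u = x''''` and `α`. -/
noncomputable def rodNonlinearity (γ : ℝ) (p : C(Icc a b, ℝ) × ℝ) : C(Icc a b, ℝ) :=
  let x (k : ℕ) := shapeDerivative k p.1
  γ • x 0 ^ 3 + (3 : ℝ) • x 2 ^ 3 + (12 : ℝ) • (x 1 * x 2 * x 3)
    + (3 : ℝ) • (x 1 ^ 2 * (x 4 - (p.2 / 2) • x 2))

theorem contDiff_rodNonlinearity (γ : ℝ) {n : WithTop ℕ∞} :
    ContDiff ℝ n (rodNonlinearity (a := a) (b := b) γ) := by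
  unfold rodNonlinearity
  dsimp only
  fun_prop

theorem rodNonlinearity_smul (γ t : ℝ) (u : C(Icc a b, ℝ)) (α : ℝ) :
    rodNonlinearity γ (t • u, α) = t ^ (2 + 1) • rodNonlinearity γ (u, α) := by
  ext s
  simp only [rodNonlinearity, map_smul, ContinuousMap.add_apply, ContinuousMap.coe_smul,
    ContinuousMap.coe_pow, ContinuousMap.coe_mul, ContinuousMap.coe_sub, Pi.smul_apply,
    Pi.pow_apply, Pi.mul_apply, Pi.sub_apply, smul_eq_mul]
  ring

theorem integral_eq_primitive_apply {g : ℝ → ℝ} (hg : Continuous g) {u : C(Icc a b, ℝ)}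
    (hgu : ∀ s : Icc a b, g s = u s) (p s : Icc a b) :
    ∫ τ in (p : ℝ)..s, g τ = primitive p u s := by
  rw [primitive_apply_eq_sub (F := fun t => ∫ τ in (p : ℝ)..t, g τ) fun t => ?_]
  · simp
  · exact hgu t ▸ (hg.integral_hasStrictDerivAt p t).hasDerivAt.hasDerivWithinAt

theorem exists_iteratedDeriv_eq_shapeDerivative (u : C(Icc a b, ℝ)) :
    ∃ x : ℝ → ℝ, ContDiff ℝ 4 x ∧
      ∀ k ≤ 4, ∀ s : Icc a b, iteratedDeriv k x s = shapeDerivative k u s := by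
  let x₃ := fun t => ∫ τ in a..t, IccExtendCM u τ
  let x₂ := fun t => ∫ τ in b..t, x₃ τ
  let x₁ := fun t => ∫ τ in a..t, x₂ τ
  let x := fun t => ∫ τ in b..t, x₁ τ
  have hx₃ : ContDiff ℝ 1 x₃ := contDiff_integral (contDiff_zero.2 (map_continuous _)) a
  have hx₂ : ContDiff ℝ 2 x₂ := contDiff_integral hx₃ b
  have hx₁ : ContDiff ℝ 3 x₁ := contDiff_integral hx₂ a
  have hx : ContDiff ℝ 4 x := contDiff_integral hx₁ b
  have hx₃_eq (s : Icc a b) : x₃ s = primitive ⊥ u s := rfl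
  have hx₂_eq : ∀ s : Icc a b, x₂ s = secondPrimitive u s :=
    integral_eq_primitive_apply hx₃.continuous hx₃_eq ⊤
  have hx₁_eq : ∀ s : Icc a b, x₁ s = primitive ⊥ (secondPrimitive u) s :=
    integral_eq_primitive_apply hx₂.continuous hx₂_eq ⊥
  have hx_eq : ∀ s : Icc a b, x s = secondPrimitive (secondPrimitive u) s :=
    integral_eq_primitive_apply hx₁.continuous hx₁_eq ⊤
  refine ⟨x, hx, fun k hk s => ?_⟩
  interval_cases k <;>
    simp only [x, x₁, x₂, x₃, iteratedDeriv_succ_integral, iteratedDeriv_zero, hx₁.continuous,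
      hx₂.continuous, hx₃.continuous, map_continuous]
  · exact hx_eq s
  · exact hx₁_eq s
  · exact hx₂_eq s
  · exact hx₃_eq s
  · exact IccExtendCM_coe u s

theorem IsRodEquilibrium.of_shapeDerivative {α β γ : ℝ} {u : C(Icc a b, ℝ)} {x : ℝ → ℝ}
    (hx : ContDiff ℝ 4 x)
    (hxu : ∀ k ≤ 4, ∀ s : Icc a b, iteratedDeriv k x s = shapeDerivative k u s)
    (hu : u + β • secondPrimitive (secondPrimitive u) + α • secondPrimitive u =
      rodNonlinearity γ (u, α)) : IsRodEquilibrium a b α β γ x where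
  contDiff := hx
  deriv_one_left := (hxu 1 (by norm_num) ⊥).trans (primitive_apply_self ⊥ _)
  deriv_three_left := (hxu 3 (by norm_num) ⊥).trans (primitive_apply_self ⊥ _)
  right := by simpa [shapeDerivative] using hxu 0 (by norm_num) ⊤
  deriv_two_right := (hxu 2 (by norm_num) ⊤).trans (secondPrimitive_apply_top _)
  equation s hs := by
    have hx₀ := hxu 0 (by norm_num) ⟨s, hs⟩
    rw [iteratedDeriv_zero] at hx₀
    rw [hxu 4 le_rfl ⟨s, hs⟩, hxu 3 (by norm_num) ⟨s, hs⟩, hxu 2 (by norm_num) ⟨s, hs⟩,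
      hxu 1 (by norm_num) ⟨s, hs⟩, hx₀]
    have hu_s := DFunLike.congr_fun hu ⟨s, hs⟩
    simp only [rodNonlinearity, shapeDerivative, ContinuousMap.add_apply, ContinuousMap.coe_smul,
      Pi.smul_apply, smul_eq_mul, ContinuousLinearMap.comp_apply, ContinuousLinearMap.id_apply,
      ContinuousMap.coe_pow, Pi.pow_apply, ContinuousMap.coe_mul, Pi.mul_apply,
      ContinuousMap.coe_sub, Pi.sub_apply] at hu_s ⊢
    linear_combination hu_s

theorem isInvertible_borderedOperator_rod (hab : a < b) {n : ℕ} {μ : ℝ}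
    (hμ : ∀ k ≠ n, μ ≠ modeFrequency a b k ^ 2) :
    (borderedOperator (.id ℝ C(Icc a b, ℝ) +
        (modeFrequency a b n ^ 2 * μ) • secondPrimitive ∘L secondPrimitive +
        (modeFrequency a b n ^ 2 + μ) • secondPrimitive)
      (secondPrimitive (cosineMode a b (modeFrequency a b n)))
      (integralPairing (cosineMode a b (modeFrequency a b n)))).IsInvertible := by
  set ω := modeFrequency a b n
  set φ := cosineMode a b ω
  have hφ : φ + ω ^ 2 • secondPrimitive φ = 0 :=
    cosineMode_add_sq_smul_secondPrimitive (cos_modeFrequency_mul hab n)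
  refine isInvertible_borderedOperator_of_factored isCompactOperator_secondPrimitive (fun v => ?_)
    (integralPairing_self_pos hab (cosineMode_ne_zero ω)).ne'
    (fun v hv => ⟨v ⊥, eq_smul_cosineMode hv⟩) ?_
  · rw [integralPairing_secondPrimitive_comm, integralPairing_comm φ,
      integralPairing_comm (secondPrimitive φ), ← smul_eq_mul, ← map_smul, ← map_add, hφ, map_zero]
  · refine or_iff_not_imp_left.2 fun hne v hv => by_contra fun hv0 => ?_
    obtain ⟨k, hk⟩ := exists_eq_modeFrequency_sq hab hv0 hv
    exact hμ k (fun hkn => hne (by rw [hk, hkn])) hk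

theorem frequently_rod_bifurcation (hab : a < b) {n : ℕ} {μ : ℝ}
    (hμ : ∀ k ≠ n, μ ≠ modeFrequency a b k ^ 2) (γ : ℝ) :
    ∃ᶠ p : C(Icc a b, ℝ) × ℝ in 𝓝 (0, modeFrequency a b n ^ 2 + μ),
      p.1 ≠ 0 ∧ p.1 + (modeFrequency a b n ^ 2 * μ) • secondPrimitive (secondPrimitive p.1) +
        p.2 • secondPrimitive p.1 = rodNonlinearity γ p := by
  refine frequently_bifurcation_of_homogeneous (contDiff_rodNonlinearity γ) two_ne_zero
    (rodNonlinearity_smul γ) (cosineMode_ne_zero _) ?_ (isInvertible_borderedOperator_rod hab hμ)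
  set ω := modeFrequency a b n
  set φ := cosineMode a b ω
  have hφ : φ + ω ^ 2 • secondPrimitive φ = 0 :=
    cosineMode_add_sq_smul_secondPrimitive (cos_modeFrequency_mul hab n)
  have hKφ : secondPrimitive φ + ω ^ 2 • secondPrimitive (secondPrimitive φ) = 0 := by
    rw [← map_smul, ← map_add, hφ, map_zero]
  calc φ + (ω ^ 2 * μ) • secondPrimitive (secondPrimitive φ) + (ω ^ 2 + μ) • secondPrimitive φ
      = φ + ω ^ 2 • secondPrimitive φ +
          μ • (secondPrimitive φ + ω ^ 2 • secondPrimitive (secondPrimitive φ)) := by module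
    _ = 0 := by rw [hφ, hKφ, smul_zero, add_zero]

end Rod

theorem exists_small_isRodEquilibrium {a b : ℝ} (hab : a < b) {n : ℕ} {μ : ℝ}
    (hμ : ∀ k ≠ n, μ ≠ modeFrequency a b k ^ 2) (γ : ℝ) {U : Set ℝ}
    (hU : U ∈ 𝓝 (modeFrequency a b n ^ 2 + μ)) {ε : ℝ} (hε : 0 < ε) :
    ∃ α ∈ U, ∃ x, IsRodEquilibrium a b α (modeFrequency a b n ^ 2 * μ) γ x ∧
      (∃ s ∈ Icc a b, x s ≠ 0) ∧ ∀ k ≤ 4, ∀ s ∈ Icc a b, |iteratedDeriv k x s| < ε := by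
  have : Fact (a ≤ b) := ⟨hab.le⟩
  have hsmall (k : ℕ) : ∀ᶠ u : C(Icc a b, ℝ) in 𝓝 0, ‖shapeDerivative k u‖ < ε :=
    (shapeDerivative k).continuous.norm.continuousAt.eventually_lt_const (by simpa)
  have hall : ∀ᶠ u : C(Icc a b, ℝ) in 𝓝 0, ∀ k ∈ Finset.range 5, ‖shapeDerivative k u‖ < ε :=
    (Filter.eventually_all_finset _).2 fun k _ => hsmall k
  obtain ⟨⟨u, α⟩, ⟨hne, hu⟩, hbound, hα⟩ :=
    ((frequently_rod_bifurcation hab hμ γ).and_eventually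
      (hall.prodMk_nhds (eventually_mem_set.2 hU))).exists
  obtain ⟨x, hx, hxu⟩ := exists_iteratedDeriv_eq_shapeDerivative u
  refine ⟨α, hα, x, .of_shapeDerivative hx hxu hu, ?_, fun k hk s hs => ?_⟩
  · have hinj : Function.Injective (shapeDerivative 0 : C(Icc a b, ℝ) → C(Icc a b, ℝ)) :=
      (secondPrimitive_injective hab).comp (secondPrimitive_injective hab)
    have hshape : shapeDerivative 0 u ≠ 0 := (map_ne_zero_iff (shapeDerivative 0) hinj).2 hne
    obtain ⟨s, hs⟩ := DFunLike.ne_iff.1 hshape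
    exact ⟨s, s.2, by simpa [← hxu 0 (Nat.zero_le 4) s] using hs⟩
  · rw [hxu k hk ⟨s, hs⟩]
    exact ((shapeDerivative k u).norm_coe_le_norm _).trans_lt
      (hbound k (Finset.mem_range.2 (Nat.lt_succ_of_le hk)))

theorem modeFrequency_neg_self (r : ℝ) (n : ℕ) :
    modeFrequency (-r) r n = π / r * ((2 * n + 1) / 4) := by
  rw [modeFrequency]
  ring

theorem stmt_15_general (r : ℝ) (hr : 0 < r)
    (c : ℕ → ℝ)
    (hc : ∀ k : ℕ, c k = -(π / r) ^ 2 * ((2 * (k : ℝ) - 1) / 4) ^ 2)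
    (m : ℕ) (hm : 1 ≤ m) (α₀ β₀ γ₀ : ℝ)
    (hray : β₀ = -(c m) * α₀ - (c m) ^ 2)
    (hsimple : ∀ k : ℕ, 1 ≤ k → k ≠ m → β₀ ≠ -(c k) * α₀ - (c k) ^ 2) :
    ∀ U ∈ 𝓝 α₀, ∀ ε > 0, ∃ α ∈ U, ∃ x, IsRodEquilibrium (-r) r α β₀ γ₀ x ∧
      (∃ s ∈ Icc (-r) r, x s ≠ 0) ∧
      ∀ k : ℕ, k ≤ 4 → ∀ s ∈ Icc (-r) r, |iteratedDeriv k x s| < ε := by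
  intro U hU ε hε
  obtain ⟨n, rfl⟩ := Nat.exists_eq_add_of_le' hm
  have hc_freq (k : ℕ) : c (k + 1) = -modeFrequency (-r) r k ^ 2 := by
    rw [hc, modeFrequency_neg_self]
    push_cast
    ring
  -- `-c m` and `α₀ + c m` are the roots of `z ^ 2 - α₀ * z + β₀`, and by simplicity the second one
  -- is none of the `-c k` with `k ≠ m`.
  have hβ : β₀ = modeFrequency (-r) r n ^ 2 * (α₀ - modeFrequency (-r) r n ^ 2) := by
    rw [hray, hc_freq]
    ring
  have hμ (k : ℕ) (hkn : k ≠ n) :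
      α₀ - modeFrequency (-r) r n ^ 2 ≠ modeFrequency (-r) r k ^ 2 := fun hk =>
    hsimple (k + 1) k.succ_pos (by simpa using hkn) (by
      rw [hβ, hc_freq, ← hk]
      ring)
  rw [hβ]
  exact exists_small_isRodEquilibrium (neg_lt_self hr) hμ γ₀ (by rwa [add_sub_cancel]) hε

/-- At a simple point, bifurcation occurs with respect to the compressive-force
parameter `α` alone, with `β` and `γ` fixed. -/
theorem stmt_15 (r : ℝ) (hr : 0 < r)
    (c : ℕ → ℝ)
    (hc : ∀ k : ℕ, c k = -(π / r) ^ 2 * ((2 * (k : ℝ) - 1) / 4) ^ 2)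
    (m : ℕ) (hm : 1 ≤ m)
    (α₀ β₀ γ₀ : ℝ) (hα₀ : 0 < α₀) (hβ₀ : 0 < β₀) (hγ₀ : 0 < γ₀)
    (hray : β₀ = -(c m) * α₀ - (c m) ^ 2)
    (hsimple : ∀ k : ℕ, 1 ≤ k → k ≠ m → β₀ ≠ -(c k) * α₀ - (c k) ^ 2) :
    ∀ ε > 0, ∃ α : ℝ, ∃ x : ℝ → ℝ,
      0 < α ∧ |α - α₀| < ε ∧
      ContDiff ℝ 4 x ∧
      (∃ s ∈ Icc (-r) r, x s ≠ 0) ∧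
      iteratedDeriv 1 x (-r) = 0 ∧ iteratedDeriv 3 x (-r) = 0 ∧
      x r = 0 ∧ iteratedDeriv 2 x r = 0 ∧
      (∀ s ∈ Icc (-r) r,
        iteratedDeriv 4 x s + α * iteratedDeriv 2 x s + β₀ * x s
          - γ₀ * (x s) ^ 3 - 3 * (iteratedDeriv 2 x s) ^ 3
          - 12 * iteratedDeriv 1 x s * iteratedDeriv 2 x s * iteratedDeriv 3 x s
          - 3 * (iteratedDeriv 1 x s) ^ 2 *
              (iteratedDeriv 4 x s - (α / 2) * iteratedDeriv 2 x s) = 0) ∧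
      (∀ k : ℕ, k ≤ 4 → ∀ s ∈ Icc (-r) r, |iteratedDeriv k x s| < ε) := by
  intro ε hε
  obtain ⟨α, ⟨hα, hαε⟩, x, hx, hne, hsmall⟩ := stmt_15_general r hr c hc m hm α₀ β₀ γ₀ hray hsimple
    (Ioi 0 ∩ Metric.ball α₀ ε) (inter_mem (Ioi_mem_nhds hα₀) (Metric.ball_mem_nhds α₀ hε)) ε hε
  exact ⟨α, x, hα, hαε, hx.contDiff, hne, hx.deriv_one_left, hx.deriv_three_left, hx.right,
    hx.deriv_two_right, hx.equation, hsmall⟩
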